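/- Let W : GL⁺(2) → ℝ be objective, isotropic and isochoric, and let f : [0,∞) → ℝ be the function defined by f(θ) = W(diag(exp(√θ), 1)). If f is twice continuously differentiable on [0,∞), then the following are equivalent: (i) W is polyconvex; (ii) W is rank-one convex; (iii) 2θ·f''(θ) + (1 − √θ)·f'(θ) ≥ 0 for all θ > 0. -/

import Mathlib

open Matrix Set

noncomputable section

/-- The space of real 2×2 matrices. -/
abbrev Mat2 : Type := Matrix (Fin 2) (Fin 2) ℝ

/-- The special orthogonal group SO(2): orthogonal 2×2 matrices with determinant 1. -/
def SO2 : Set Mat2 := {Q : Mat2 | Qᵀ * Q = 1 ∧ Q.det = 1}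

/-- A function `W` (viewed on GL⁺(2) = {F | 0 < det F}) is polyconvex if there is a
convex function `P : ℝ^{2×2} × ℝ → ℝ ∪ {+∞}` with `W F = P (F, det F)` on GL⁺(2). -/
def Polyconvex (W : Mat2 → ℝ) : Prop :=
  ∃ P : Mat2 × ℝ → EReal,
    (∀ x y : Mat2 × ℝ, ∀ a b : ℝ, 0 ≤ a → 0 ≤ b → a + b = 1 →
      P (a • x + b • y) ≤ (a : EReal) * P x + (b : EReal) * P y) ∧
    (∀ F : Mat2, 0 < F.det → (W F : EReal) = P (F, F.det))

/-- Rank-one convexity of `W` on GL⁺(2): convexity along rank-one line segments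
lying in GL⁺(2). -/
def RankOneConvex (W : Mat2 → ℝ) : Prop :=
  ∀ F : Mat2, 0 < F.det → ∀ ξ η : Fin 2 → ℝ, ∀ θ : ℝ, θ ∈ Set.Icc (0:ℝ) 1 →
    (∀ t ∈ Set.Icc (0:ℝ) 1, 0 < (F + t • vecMulVec ξ η).det) →
    W (F + (1 - θ) • vecMulVec ξ η) ≤ θ * W F + (1 - θ) * W (F + vecMulVec ξ η)

/-- Objectivity and isotropy: bi-SO(2)-invariance on GL⁺(2). -/
def ObjectiveIsotropic (W : Mat2 → ℝ) : Prop :=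
  ∀ F : Mat2, 0 < F.det → ∀ Q₁ Q₂ : Mat2, Q₁ ∈ SO2 → Q₂ ∈ SO2 →
    W (Q₁ * F * Q₂) = W F

/-- Isochoric: invariance under positive scaling on GL⁺(2). -/
def Isochoric (W : Mat2 → ℝ) : Prop :=
  ∀ F : Mat2, 0 < F.det → ∀ a : ℝ, 0 < a → W (a • F) = W F

/-- The 2×2 diagonal matrix diag(a, b). -/
def diag2 (a b : ℝ) : Mat2 := !![a, 0; 0, b]

/-- The squared Frobenius norm of a 2×2 matrix. -/
def frobSq (F : Mat2) : ℝ := ∑ i, ∑ j, (F i j) ^ 2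

/-- The operator norm of `F` induced by the Euclidean norm on ℝ²:
the supremum of ‖F·x‖ over Euclidean-unit vectors x. -/
def opNorm2 (F : Mat2) : ℝ :=
  sSup {r : ℝ | ∃ x : Fin 2 → ℝ, (x 0) ^ 2 + (x 1) ^ 2 = 1 ∧
    r = Real.sqrt ((F.mulVec x 0) ^ 2 + (F.mulVec x 1) ^ 2)}

/-!
Isotropy and isochority reduce `W` to the single function `h t = W (diag(t, 1))` of the ratio
`t = λ₁ / λ₂` of singular values, which satisfies `h t⁻¹ = h t`.

Rank-one convexity along `diag(t, 1)` makes `h` convex on `(0, ∞)`, and the symmetry `t ↦ t⁻¹`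
then makes it nondecreasing on `[1, ∞)`. Conversely, `λ₁ / λ₂ = λ₁² / det F`, where the largest
singular value `λ₁ = |p| + |q|` is a convex function of `F` (with `p`, `q` the conformal and
anticonformal parts of `F`) and `(x, d) ↦ x² / d` is jointly convex for `d > 0`; composing with
the convex nondecreasing `h` exhibits `W F` as a convex function of `(F, det F)`.

In terms of `f`, `h t = f (log² t)` for `t ≥ 1`, and `h''` is a positive multiple of the expression
in the differential inequality. Convexity on `[1, ∞)` then forces monotonicity, because
differentiability of `f` at `0` gives `h' 1 = 0`.
-/

section Convexity

variable {E : Type*}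

open scoped Classical in
/-- The extension by `+∞` of a real function on `s` to the whole space, the standard way of
viewing a convex function on `s` as an extended-valued convex function. -/
def extendTop (s : Set E) (g : E → ℝ) (x : E) : EReal :=
  if x ∈ s then (g x : EReal) else ⊤

lemma extendTop_of_mem {s : Set E} {x : E} (hx : x ∈ s) (g : E → ℝ) : extendTop s g x = g x :=
  if_pos hx

lemma extendTop_of_notMem {s : Set E} {x : E} (hx : x ∉ s) (g : E → ℝ) : extendTop s g x = ⊤ :=
  if_neg hx

lemma coe_mul_extendTop_ne_bot {a : ℝ} (ha : 0 < a) (s : Set E) (g : E → ℝ) (x : E) :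
    (a : EReal) * extendTop s g x ≠ ⊥ := by
  by_cases hx : x ∈ s
  · rw [extendTop_of_mem hx, ← EReal.coe_mul]
    exact EReal.coe_ne_bot _
  · rw [extendTop_of_notMem hx, EReal.coe_mul_top_of_pos ha]
    exact top_ne_bot

variable [AddCommGroup E] [Module ℝ E]

lemma extendTop_add_le {s : Set E} {g : E → ℝ} (hg : ConvexOn ℝ s g) (x y : E) {a b : ℝ}
    (ha : 0 ≤ a) (hb : 0 ≤ b) (hab : a + b = 1) :
    extendTop s g (a • x + b • y) ≤ a * extendTop s g x + b * extendTop s g y := by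
  rcases ha.eq_or_lt with rfl | ha'
  · obtain rfl : b = 1 := by linarith
    simp
  rcases hb.eq_or_lt with rfl | hb'
  · obtain rfl : a = 1 := by linarith
    simp
  by_cases hx : x ∈ s
  · by_cases hy : y ∈ s
    · rw [extendTop_of_mem hx, extendTop_of_mem hy, extendTop_of_mem (hg.1 hx hy ha hb hab)]
      exact_mod_cast hg.2 hx hy ha hb hab
    · rw [extendTop_of_notMem hy, EReal.coe_mul_top_of_pos hb',
        EReal.add_top_of_ne_bot (coe_mul_extendTop_ne_bot ha' s g x)]
      exact le_top
  · rw [extendTop_of_notMem hx, EReal.coe_mul_top_of_pos ha',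
      EReal.top_add_of_ne_bot (coe_mul_extendTop_ne_bot hb' s g y)]
    exact le_top

lemma convexOn_comp_of_mapsTo {s : Set E} {t : Set ℝ} {u : E → ℝ} {g : ℝ → ℝ}
    (hg : ConvexOn ℝ t g) (hmono : MonotoneOn g t) (hu : ConvexOn ℝ s u) (hst : MapsTo u s t) :
    ConvexOn ℝ s fun x => g (u x) :=
  ⟨hu.1, fun _ hx _ hy _ _ ha hb hab =>
    (hmono (hst (hu.1 hx hy ha hb hab)) (hg.1 (hst hx) (hst hy) ha hb hab)
      (hu.2 hx hy ha hb hab)).trans (hg.2 (hst hx) (hst hy) ha hb hab)⟩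

lemma sq_div_convexCombo_le {a b s t : ℝ} (x y : ℝ) (ha : 0 ≤ a) (hb : 0 ≤ b) (hs : 0 < s)
    (ht : 0 < t) (hd : 0 < a * s + b * t) :
    (a * x + b * y) ^ 2 / (a * s + b * t) ≤ a * (x ^ 2 / s) + b * (y ^ 2 / t) := by
  have hgap : (a * (x ^ 2 / s) + b * (y ^ 2 / t)) * (a * s + b * t) - (a * x + b * y) ^ 2
      = a * b * (x * t - y * s) ^ 2 / (s * t) := by
    field_simp
    ring
  have hgap_nonneg : 0 ≤ a * b * (x * t - y * s) ^ 2 / (s * t) := by positivity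
  rw [div_le_iff₀ hd]
  linarith

lemma convexOn_sq_div {s : Set E} {u : E → ℝ} (hu : ConvexOn ℝ s u) (hu₀ : ∀ x ∈ s, 0 ≤ u x) :
    ConvexOn ℝ (s ×ˢ Ioi (0 : ℝ)) fun z => u z.1 ^ 2 / z.2 := by
  refine ⟨hu.1.prod (convex_Ioi 0), ?_⟩
  rintro ⟨x, c⟩ ⟨hx, hc⟩ ⟨y, d⟩ ⟨hy, hd⟩ a b ha hb hab
  have hcd : 0 < a * c + b * d := convex_Ioi (0 : ℝ) hc hd ha hb hab
  calc u (a • x + b • y) ^ 2 / (a * c + b * d)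
      ≤ (a * u x + b * u y) ^ 2 / (a * c + b * d) := by
        have := hu₀ _ (hu.1 hx hy ha hb hab)
        gcongr
        exact hu.2 hx hy ha hb hab
    _ ≤ a * (u x ^ 2 / c) + b * (u y ^ 2 / d) := sq_div_convexCombo_le _ _ ha hb hc hd hcd

lemma monotoneOn_Ici_one_of_convexOn_of_inv {g : ℝ → ℝ} (hg : ConvexOn ℝ (Ioi 0) g)
    (hinv : ∀ t, 0 < t → g t⁻¹ = g t) : MonotoneOn g (Ici 1) := by
  intro x hx y hy hxy
  have hy₀ : (0 : ℝ) < y := one_pos.trans_le hy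
  have hmem : x ∈ Icc y⁻¹ y := ⟨(inv_le_one_of_one_le₀ hy).trans hx, hxy⟩
  simpa only [hinv y hy₀, max_self] using hg.le_max_of_mem_Icc (inv_pos.2 hy₀) hy₀ hmem

lemma monotoneOn_Ici_of_convexOn_of_hasDerivWithinAt {g : ℝ → ℝ} {c g' : ℝ}
    (hg : ConvexOn ℝ (Ici c) g) (hd : HasDerivWithinAt g g' (Ici c) c) (hg' : 0 ≤ g') :
    MonotoneOn g (Ici c) := by
  have hmin : ∀ y, c < y → g c ≤ g y := by
    intro y hy
    have hslope := hg'.trans (hg.le_slope_of_hasDerivWithinAt self_mem_Ici hy.le hy hd)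
    rw [slope_def_field, le_div_iff₀ (sub_pos.2 hy), zero_mul] at hslope
    exact sub_nonneg.1 hslope
  intro x hx y hy hxy
  rcases (mem_Ici.1 hx).eq_or_lt with rfl | hcx
  · rcases hxy.eq_or_lt with rfl | hcy
    · exact le_rfl
    · exact hmin y hcy
  · exact hg.le_right_of_left_le'' self_mem_Ici hy hcx hxy (hmin x hcx)

end Convexity

section LogSq

variable {f : ℝ → ℝ} {t : ℝ}

lemma hasDerivAt_log_sq (ht : t ≠ 0) :
    HasDerivAt (fun s => Real.log s ^ 2) (2 * Real.log t / t) t :=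
  ((Real.hasDerivAt_log ht).pow 2).congr_deriv (by simp [div_eq_mul_inv])

lemma log_sq_pos (ht : 1 < t) : 0 < Real.log t ^ 2 :=
  pow_pos (Real.log_pos ht) 2

lemma hasDerivAt_comp_log_sq (hf : DifferentiableOn ℝ f (Ioi 0)) (ht : 1 < t) :
    HasDerivAt (fun s => f (Real.log s ^ 2))
      (deriv f (Real.log t ^ 2) * (2 * Real.log t / t)) t :=
  (hf.hasDerivAt (Ioi_mem_nhds (log_sq_pos ht))).comp t (hasDerivAt_log_sq (by positivity))

lemma hasDerivAt_deriv_comp_log_sq (hf : DifferentiableOn ℝ f (Ioi 0))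
    (hf' : DifferentiableOn ℝ (deriv f) (Ioi 0)) (ht : 1 < t) :
    HasDerivAt (deriv fun s => f (Real.log s ^ 2))
      (2 / t ^ 2 * (2 * Real.log t ^ 2 * deriv (deriv f) (Real.log t ^ 2)
        + (1 - Real.log t) * deriv f (Real.log t ^ 2))) t := by
  have ht₀ : t ≠ 0 := by positivity
  have hderiv : (deriv fun s => f (Real.log s ^ 2)) =ᶠ[nhds t]
      fun s => deriv f (Real.log s ^ 2) * (2 * Real.log s / s) := by
    filter_upwards [Ioi_mem_nhds ht] with s hs
    exact (hasDerivAt_comp_log_sq hf hs).deriv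
  have hprod := (hasDerivAt_comp_log_sq hf' ht).mul
    (((Real.hasDerivAt_log ht₀).const_mul 2).div (hasDerivAt_id t) ht₀)
  refine (hprod.congr_deriv ?_).congr_of_eventuallyEq hderiv
  simp only [Pi.div_apply, id]
  field_simp

lemma continuousOn_comp_log_sq (hf : ContinuousOn f (Ici 0)) :
    ContinuousOn (fun t => f (Real.log t ^ 2)) (Ici 1) := by
  refine hf.comp (fun t ht => ?_) fun t _ => sq_nonneg (Real.log t)
  exact (hasDerivAt_log_sq (one_pos.trans_le ht).ne').continuousAt.continuousWithinAt

lemma convexOn_comp_log_sq_of_two_mul_deriv2_add_nonneg (hf : DifferentiableOn ℝ f (Ici 0))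
    (hf' : DifferentiableOn ℝ (deriv f) (Ioi 0))
    (h : ∀ θ, 0 < θ → 0 ≤ 2 * θ * deriv (deriv f) θ + (1 - √θ) * deriv f θ) :
    ConvexOn ℝ (Ici 1) fun t => f (Real.log t ^ 2) := by
  have hf₀ := hf.mono Ioi_subset_Ici_self
  refine convexOn_of_deriv2_nonneg (convex_Ici 1) (continuousOn_comp_log_sq hf.continuousOn)
    ?_ ?_ ?_ <;> rw [interior_Ici]
  · exact fun t ht => (hasDerivAt_comp_log_sq hf₀ ht).differentiableAt.differentiableWithinAt
  · exact fun t ht =>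
      (hasDerivAt_deriv_comp_log_sq hf₀ hf' ht).differentiableAt.differentiableWithinAt
  · intro t ht
    have hθ := h _ (log_sq_pos ht)
    rw [Real.sqrt_sq (Real.log_pos ht).le] at hθ
    rw [Function.iterate_succ, Function.iterate_one, Function.comp_apply,
      (hasDerivAt_deriv_comp_log_sq hf₀ hf' ht).deriv]
    positivity

lemma two_mul_deriv2_add_nonneg_of_convexOn_comp_log_sq (hf : DifferentiableOn ℝ f (Ioi 0))
    (hf' : DifferentiableOn ℝ (deriv f) (Ioi 0))
    (hconv : ConvexOn ℝ (Ioi 1) fun t => f (Real.log t ^ 2)) {θ : ℝ} (hθ : 0 < θ) :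
    0 ≤ 2 * θ * deriv (deriv f) θ + (1 - √θ) * deriv f θ := by
  have hmono : MonotoneOn (deriv fun t => f (Real.log t ^ 2)) (Ioi 1) :=
    hconv.monotoneOn_deriv fun t ht => (hasDerivAt_comp_log_sq hf ht).differentiableAt
  have ht : 1 < Real.exp √θ := Real.one_lt_exp_iff.2 (Real.sqrt_pos.2 hθ)
  have hderiv := hasDerivAt_deriv_comp_log_sq hf hf' ht
  have hnonneg := hmono.derivWithin_nonneg (x := Real.exp √θ)
  rw [derivWithin_of_isOpen isOpen_Ioi ht, hderiv.deriv, Real.log_exp, Real.sq_sqrt hθ.le]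
    at hnonneg
  exact (mul_nonneg_iff_of_pos_left (by positivity)).1 hnonneg

lemma monotoneOn_comp_log_sq (hf : DifferentiableWithinAt ℝ f (Ici 0) 0)
    (hconv : ConvexOn ℝ (Ici 1) fun t => f (Real.log t ^ 2)) :
    MonotoneOn (fun t => f (Real.log t ^ 2)) (Ici 1) := by
  have hlog : HasDerivWithinAt (fun t => Real.log t ^ 2) 0 (Ici 1) 1 :=
    (hasDerivAt_log_sq one_ne_zero).hasDerivWithinAt.congr_deriv (by simp)
  have hcomp : HasDerivWithinAt (fun t => f (Real.log t ^ 2)) (derivWithin f (Ici 0) 0 * 0)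
      (Ici 1) 1 :=
    HasDerivWithinAt.comp_of_eq 1 hf.hasDerivWithinAt hlog (fun t _ => sq_nonneg (Real.log t))
      (by simp)
  exact monotoneOn_Ici_of_convexOn_of_hasDerivWithinAt hconv hcomp (mul_zero _).ge

lemma convexOn_and_monotoneOn_comp_log_sq_iff (hf : DifferentiableOn ℝ f (Ici 0))
    (hf' : DifferentiableOn ℝ (deriv f) (Ioi 0)) :
    (ConvexOn ℝ (Ici 1) (fun t => f (Real.log t ^ 2)) ∧
      MonotoneOn (fun t => f (Real.log t ^ 2)) (Ici 1)) ↔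
    ∀ θ, 0 < θ → 0 ≤ 2 * θ * deriv (deriv f) θ + (1 - √θ) * deriv f θ := by
  constructor
  · rintro ⟨hconv, -⟩ θ hθ
    exact two_mul_deriv2_add_nonneg_of_convexOn_comp_log_sq (hf.mono Ioi_subset_Ici_self)
      hf' (hconv.subset Ioi_subset_Ici_self (convex_Ioi 1)) hθ
  · intro h
    have hconv := convexOn_comp_log_sq_of_two_mul_deriv2_add_nonneg hf hf' h
    exact ⟨hconv, monotoneOn_comp_log_sq (hf 0 self_mem_Ici) hconv⟩

end LogSq

section SingularValues

/-- The rotation of the plane by the angle `φ`. -/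
def rotationMatrix (φ : ℝ) : Mat2 := !![Real.cos φ, -Real.sin φ; Real.sin φ, Real.cos φ]

lemma rotationMatrix_mem_SO2 (φ : ℝ) : rotationMatrix φ ∈ SO2 := by
  have h := Real.sin_sq_add_cos_sq φ
  constructor
  · rw [rotationMatrix, Matrix.eta_fin_two (Matrix.transpose _), Matrix.mul_fin_two,
      Matrix.one_fin_two]
    simp only [Matrix.transpose_apply, Matrix.of_apply, Matrix.cons_val_zero, Matrix.cons_val_one,
      EmbeddingLike.apply_eq_iff_eq, vecCons_inj, and_true]
    refine ⟨⟨?_, ?_⟩, ?_, ?_⟩ <;> linarith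
  · rw [rotationMatrix, Matrix.det_fin_two_of]
    linarith

lemma det_diag2 (a b : ℝ) : (diag2 a b).det = a * b := by
  simp [diag2, Matrix.det_fin_two]

lemma smul_diag2 (c a b : ℝ) : c • diag2 a b = diag2 (c * a) (c * b) := by
  simp [diag2, Matrix.smul_of]

lemma rotationMatrix_conj_diag2 (a b : ℝ) :
    rotationMatrix (Real.pi / 2) * diag2 a b * rotationMatrix (-(Real.pi / 2)) = diag2 b a := by
  simp [rotationMatrix, diag2]

/-- The complex number `p` in the decomposition `F z = p * z + q * conj z` of a real-linear map of
`ℝ² = ℂ` into its conformal and anticonformal parts. -/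
def conformalPart : Mat2 →ₗ[ℝ] ℂ where
  toFun F := ⟨(F 0 0 + F 1 1) / 2, (F 1 0 - F 0 1) / 2⟩
  map_add' F G := by
    apply Complex.ext <;> simp only [Matrix.add_apply, Complex.add_re, Complex.add_im] <;> ring
  map_smul' c F := by
    apply Complex.ext <;>
      simp only [Matrix.smul_apply, Complex.smul_re, Complex.smul_im, smul_eq_mul,
        RingHom.id_apply] <;> ring

/-- The complex number `q` in the decomposition `F z = p * z + q * conj z` of a real-linear map of
`ℝ² = ℂ` into its conformal and anticonformal parts. -/
def anticonformalPart : Mat2 →ₗ[ℝ] ℂ where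
  toFun F := ⟨(F 0 0 - F 1 1) / 2, (F 1 0 + F 0 1) / 2⟩
  map_add' F G := by
    apply Complex.ext <;> simp only [Matrix.add_apply, Complex.add_re, Complex.add_im] <;> ring
  map_smul' c F := by
    apply Complex.ext <;>
      simp only [Matrix.smul_apply, Complex.smul_re, Complex.smul_im, smul_eq_mul,
        RingHom.id_apply] <;> ring

/-- The largest singular value of a real 2×2 matrix, written as `|p| + |q|` so that its convexity
is that of the modulus. -/
def maxSingularValue (F : Mat2) : ℝ := ‖conformalPart F‖ + ‖anticonformalPart F‖

/-- The smallest singular value of a real 2×2 matrix, with the sign of the determinant. -/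
def minSingularValue (F : Mat2) : ℝ := ‖conformalPart F‖ - ‖anticonformalPart F‖

lemma maxSingularValue_nonneg (F : Mat2) : 0 ≤ maxSingularValue F :=
  add_nonneg (norm_nonneg _) (norm_nonneg _)

lemma minSingularValue_le_maxSingularValue (F : Mat2) :
    minSingularValue F ≤ maxSingularValue F := by
  unfold minSingularValue maxSingularValue
  linarith [norm_nonneg (anticonformalPart F)]

lemma convexOn_maxSingularValue : ConvexOn ℝ univ maxSingularValue :=
  (convexOn_univ_norm.comp_linearMap conformalPart).add
    (convexOn_univ_norm.comp_linearMap anticonformalPart)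

lemma exists_eq_rotationMatrix_mul_diag2_mul (F : Mat2) : ∃ u v : ℝ,
    F = rotationMatrix u * diag2 (maxSingularValue F) (minSingularValue F) * rotationMatrix v := by
  obtain ⟨α, hα⟩ : ∃ α, α = (conformalPart F).arg := ⟨_, rfl⟩
  obtain ⟨β, hβ⟩ : ∃ β, β = (anticonformalPart F).arg := ⟨_, rfl⟩
  -- A diagonal matrix with conformal part `p` and anticonformal part `q` becomes, between the
  -- rotations by `u` and `v`, one with parts `p e^{i(u+v)}` and `q e^{i(u-v)}`.
  obtain ⟨u, v, rfl, rfl⟩ : ∃ u v, α = u + v ∧ β = u - v :=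
    ⟨(α + β) / 2, (α - β) / 2, by ring, by ring⟩
  have hpre : ‖conformalPart F‖ * Real.cos (u + v) = (F 0 0 + F 1 1) / 2 :=
    hα ▸ Complex.norm_mul_cos_arg _
  have hpim : ‖conformalPart F‖ * Real.sin (u + v) = (F 1 0 - F 0 1) / 2 :=
    hα ▸ Complex.norm_mul_sin_arg _
  have hqre : ‖anticonformalPart F‖ * Real.cos (u - v) = (F 0 0 - F 1 1) / 2 :=
    hβ ▸ Complex.norm_mul_cos_arg _
  have hqim : ‖anticonformalPart F‖ * Real.sin (u - v) = (F 1 0 + F 0 1) / 2 :=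
    hβ ▸ Complex.norm_mul_sin_arg _
  rw [Real.cos_add] at hpre
  rw [Real.sin_add] at hpim
  rw [Real.cos_sub] at hqre
  rw [Real.sin_sub] at hqim
  refine ⟨u, v, (Matrix.eta_fin_two F).trans ?_⟩
  simp only [rotationMatrix, diag2, Matrix.mul_fin_two, EmbeddingLike.apply_eq_iff_eq, vecCons_inj,
    and_true, maxSingularValue, minSingularValue]
  refine ⟨⟨?_, ?_⟩, ?_, ?_⟩ <;> linarith

lemma det_eq_maxSingularValue_mul_minSingularValue (F : Mat2) :
    F.det = maxSingularValue F * minSingularValue F := by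
  obtain ⟨u, v, huv⟩ := exists_eq_rotationMatrix_mul_diag2_mul F
  conv_lhs => rw [huv]
  rw [Matrix.det_mul, Matrix.det_mul, (rotationMatrix_mem_SO2 u).2, (rotationMatrix_mem_SO2 v).2,
    det_diag2, one_mul, mul_one]

lemma minSingularValue_pos {F : Mat2} (hF : 0 < F.det) : 0 < minSingularValue F :=
  pos_of_mul_pos_right (det_eq_maxSingularValue_mul_minSingularValue F ▸ hF)
    (maxSingularValue_nonneg F)

lemma maxSingularValue_pos {F : Mat2} (hF : 0 < F.det) : 0 < maxSingularValue F :=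
  (minSingularValue_pos hF).trans_le (minSingularValue_le_maxSingularValue F)

lemma maxSingularValue_sq_div_det {F : Mat2} (hF : 0 < F.det) :
    maxSingularValue F ^ 2 / F.det = maxSingularValue F / minSingularValue F := by
  have hmin := minSingularValue_pos hF
  have hmax := maxSingularValue_pos hF
  rw [det_eq_maxSingularValue_mul_minSingularValue]
  field_simp

lemma one_le_maxSingularValue_sq_div_det {F : Mat2} (hF : 0 < F.det) :
    1 ≤ maxSingularValue F ^ 2 / F.det := by
  rw [maxSingularValue_sq_div_det hF, one_le_div (minSingularValue_pos hF)]
  exact minSingularValue_le_maxSingularValue F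

end SingularValues

section Energies

variable {W : Mat2 → ℝ}

lemma ObjectiveIsotropic.apply_diag2_maxSingularValue (hOI : ObjectiveIsotropic W) {F : Mat2}
    (hF : 0 < F.det) : W (diag2 (maxSingularValue F) (minSingularValue F)) = W F := by
  obtain ⟨u, v, huv⟩ := exists_eq_rotationMatrix_mul_diag2_mul F
  conv_rhs => rw [huv]
  refine (hOI _ ?_ _ _ (rotationMatrix_mem_SO2 u) (rotationMatrix_mem_SO2 v)).symm
  rwa [det_diag2, ← det_eq_maxSingularValue_mul_minSingularValue]

lemma ObjectiveIsotropic.apply_diag2_swap (hOI : ObjectiveIsotropic W) {a b : ℝ}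
    (hab : 0 < a * b) : W (diag2 b a) = W (diag2 a b) := by
  rw [← rotationMatrix_conj_diag2 a b]
  exact hOI _ (by rwa [det_diag2]) _ _ (rotationMatrix_mem_SO2 _) (rotationMatrix_mem_SO2 _)

lemma Isochoric.apply_diag2_eq_apply_div (hIso : Isochoric W) {a b : ℝ} (ha : 0 < a) (hb : 0 < b) :
    W (diag2 a b) = W (diag2 (a / b) 1) := by
  rw [← hIso (diag2 (a / b) 1) (by rw [det_diag2]; positivity) b hb, smul_diag2, mul_one,
    mul_div_cancel₀ a hb.ne']

lemma apply_eq_apply_diag2_maxSingularValue_sq_div_det (hOI : ObjectiveIsotropic W)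
    (hIso : Isochoric W) {F : Mat2} (hF : 0 < F.det) :
    W F = W (diag2 (maxSingularValue F ^ 2 / F.det) 1) := by
  rw [maxSingularValue_sq_div_det hF, ← hOI.apply_diag2_maxSingularValue hF,
    hIso.apply_diag2_eq_apply_div (maxSingularValue_pos hF) (minSingularValue_pos hF)]

lemma apply_diag2_inv (hOI : ObjectiveIsotropic W) (hIso : Isochoric W) {t : ℝ} (ht : 0 < t) :
    W (diag2 t⁻¹ 1) = W (diag2 t 1) := by
  rw [← one_div, ← hIso.apply_diag2_eq_apply_div one_pos ht,
    hOI.apply_diag2_swap (by simpa using ht)]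

lemma det_add_smul_vecMulVec (F : Mat2) (ξ η : Fin 2 → ℝ) (t : ℝ) :
    (F + t • vecMulVec ξ η).det = (1 - t) * F.det + t * (F + vecMulVec ξ η).det := by
  simp only [Matrix.det_fin_two, Matrix.add_apply, Matrix.smul_apply, vecMulVec_apply, smul_eq_mul]
  ring

lemma Polyconvex.rankOneConvex (h : Polyconvex W) : RankOneConvex W := by
  obtain ⟨P, hP, hW⟩ := h
  intro F hF ξ η θ hθ hdet
  have hθ' : 1 - θ ∈ Icc (0 : ℝ) 1 := ⟨sub_nonneg.2 hθ.2, sub_le_self 1 hθ.1⟩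
  have hG : 0 < (F + vecMulVec ξ η).det := by simpa using hdet 1 ⟨zero_le_one, le_rfl⟩
  have hcombo : θ • (F, F.det) + (1 - θ) • (F + vecMulVec ξ η, (F + vecMulVec ξ η).det)
      = (F + (1 - θ) • vecMulVec ξ η, (F + (1 - θ) • vecMulVec ξ η).det) := by
    rw [det_add_smul_vecMulVec]
    refine Prod.ext ?_ ?_
    · simp only [Prod.fst_add, Prod.smul_fst]
      module
    · simp
  have hle := hP (F, F.det) (F + vecMulVec ξ η, (F + vecMulVec ξ η).det) θ (1 - θ) hθ.1 hθ'.1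
    (add_sub_cancel θ 1)
  rw [hcombo, ← hW _ hF, ← hW _ hG, ← hW _ (hdet _ hθ')] at hle
  exact_mod_cast hle

lemma Polyconvex.of_convexOn {s : Set (Mat2 × ℝ)} {g : Mat2 × ℝ → ℝ} (hg : ConvexOn ℝ s g)
    (hs : ∀ F : Mat2, 0 < F.det → (F, F.det) ∈ s)
    (hW : ∀ F : Mat2, 0 < F.det → W F = g (F, F.det)) : Polyconvex W :=
  ⟨extendTop s g, fun x y _ _ ha hb hab => extendTop_add_le hg x y ha hb hab,
    fun F hF => by rw [extendTop_of_mem (hs F hF), hW F hF]⟩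

lemma diag2_add_smul_vecMulVec (x y c t : ℝ) :
    diag2 x c + t • vecMulVec ![y - x, 0] ![1, 0] = diag2 ((1 - t) * x + t * y) c := by
  have hentry : x + t * (y - x) = (1 - t) * x + t * y := by ring
  rw [← hentry]
  ext i j
  fin_cases i <;> fin_cases j <;> simp [diag2]

lemma RankOneConvex.convexOn_diag2 (h : RankOneConvex W) {c : ℝ} (hc : 0 < c) :
    ConvexOn ℝ (Ioi 0) fun t => W (diag2 t c) := by
  refine ⟨convex_Ioi 0, fun x hx y hy a b ha hb hab => ?_⟩
  obtain rfl : b = 1 - a := by linarith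
  have hend : diag2 x c + vecMulVec ![y - x, 0] ![1, 0] = diag2 y c := by
    simpa using diag2_add_smul_vecMulVec x y c 1
  have hdet : ∀ t ∈ Icc (0 : ℝ) 1,
      0 < (diag2 x c + t • vecMulVec ![y - x, 0] ![1, 0]).det := by
    intro t ht
    rw [diag2_add_smul_vecMulVec, det_diag2]
    exact mul_pos (convex_Ioi (0 : ℝ) hx hy (sub_nonneg.2 ht.2) ht.1 (sub_add_cancel 1 t)) hc
  have hle := h (diag2 x c) (by rw [det_diag2]; exact mul_pos hx hc) _ _ a
    ⟨ha, sub_nonneg.1 hb⟩ hdet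
  rwa [hend, diag2_add_smul_vecMulVec, sub_sub_cancel] at hle

-- The truncation `max 1` keeps the argument of `t ↦ W (diag(t, 1))` inside `[1, ∞)` at the pairs
-- `(F, d)` with `d ≠ det F`.
lemma convexOn_max_one_maxSingularValue_sq_div :
    ConvexOn ℝ (univ ×ˢ Ioi 0) fun z : Mat2 × ℝ => max 1 (maxSingularValue z.1 ^ 2 / z.2) :=
  have hsq := convexOn_sq_div convexOn_maxSingularValue fun F _ => maxSingularValue_nonneg F
  (convexOn_const 1 hsq.1).sup hsq

lemma polyconvex_of_convexOn_of_monotoneOn (hOI : ObjectiveIsotropic W) (hIso : Isochoric W)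
    (hconv : ConvexOn ℝ (Ici 1) fun t => W (diag2 t 1))
    (hmono : MonotoneOn (fun t => W (diag2 t 1)) (Ici 1)) : Polyconvex W := by
  refine Polyconvex.of_convexOn (convexOn_comp_of_mapsTo hconv hmono
    convexOn_max_one_maxSingularValue_sq_div fun _ _ => mem_Ici.2 (le_max_left _ _))
    (fun F hF => ⟨mem_univ F, hF⟩) fun F hF => ?_
  rw [max_eq_right (one_le_maxSingularValue_sq_div_det hF)]
  exact apply_eq_apply_diag2_maxSingularValue_sq_div_det hOI hIso hF

theorem tfae_polyconvex_rankOneConvex_convexOn (hOI : ObjectiveIsotropic W)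
    (hIso : Isochoric W) :
    List.TFAE
      [Polyconvex W,
       RankOneConvex W,
       ConvexOn ℝ (Ioi 0) fun t => W (diag2 t 1),
       ConvexOn ℝ (Ici 1) (fun t => W (diag2 t 1)) ∧
         MonotoneOn (fun t => W (diag2 t 1)) (Ici 1)] := by
  tfae_have 1 → 2 := Polyconvex.rankOneConvex
  tfae_have 2 → 3 := fun h => h.convexOn_diag2 one_pos
  tfae_have 3 → 4 := fun h =>
    ⟨h.subset (Ici_subset_Ioi.2 one_pos) (convex_Ici 1),
      monotoneOn_Ici_one_of_convexOn_of_inv h fun _ ht => apply_diag2_inv hOI hIso ht⟩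
  tfae_have 4 → 1 := fun h => polyconvex_of_convexOn_of_monotoneOn hOI hIso h.1 h.2
  tfae_finish

end Energies

lemma differentiableOn_deriv_of_contDiffOn_two {f : ℝ → ℝ} (hf : ContDiffOn ℝ 2 f (Ici 0)) :
    DifferentiableOn ℝ (deriv f) (Ioi 0) :=
  ((contDiffOn_succ_iff_deriv_of_isOpen isOpen_Ioi).1
    (hf.mono Ioi_subset_Ici_self)).2.2.differentiableOn one_ne_zero

theorem isochoric_tfae_logSq_general (W : Mat2 → ℝ)
    (hOI : ObjectiveIsotropic W) (hIso : Isochoric W)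
    (f : ℝ → ℝ) (hf : ∀ θ : ℝ, 0 ≤ θ → f θ = W (diag2 (Real.exp √θ) 1))
    (hd : DifferentiableOn ℝ f (Ici 0)) (hd' : DifferentiableOn ℝ (deriv f) (Ioi 0)) :
    List.TFAE
      [Polyconvex W,
       RankOneConvex W,
       ∀ θ : ℝ, 0 < θ →
         0 ≤ 2 * θ * deriv (deriv f) θ + (1 - √θ) * deriv f θ] := by
  have hW : EqOn (fun t => W (diag2 t 1)) (fun t => f (Real.log t ^ 2)) (Ici 1) := fun t ht => by
    simp only [hf _ (sq_nonneg (Real.log t)), Real.sqrt_sq (Real.log_nonneg ht),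
      Real.exp_log (one_pos.trans_le ht)]
  have htfae := tfae_polyconvex_rankOneConvex_convexOn hOI hIso
  have hconv : ConvexOn ℝ (Ici 1) (fun t => W (diag2 t 1)) ↔
      ConvexOn ℝ (Ici 1) fun t => f (Real.log t ^ 2) := ⟨(·.congr hW), (·.congr hW.symm)⟩
  tfae_have 1 ↔ 2 := htfae.out 0 1
  tfae_have 1 ↔ 3 := (htfae.out 0 3).trans <|
    (and_congr hconv hW.congr_monotoneOn).trans (convexOn_and_monotoneOn_comp_log_sq_iff hd hd')
  tfae_finish

/-- for objective, isotropic, isochoric `W` with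
`f(θ) = W(diag(exp √θ, 1))` twice continuously differentiable on `[0,∞)`,
polyconvexity, rank-one convexity and the differential inequality
`2θf''(θ) + (1−√θ)f'(θ) ≥ 0` for all `θ > 0` are equivalent. -/
theorem isochoric_tfae_logSq (W : Mat2 → ℝ)
    (hOI : ObjectiveIsotropic W) (hIso : Isochoric W)
    (f : ℝ → ℝ) (hf : ∀ θ : ℝ, f θ = W (diag2 (Real.exp (Real.sqrt θ)) 1))
    (hC2 : ContDiffOn ℝ 2 f (Set.Ici (0:ℝ))) :
    List.TFAE
      [Polyconvex W,
       RankOneConvex W,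
       ∀ θ : ℝ, 0 < θ →
         0 ≤ 2 * θ * deriv (deriv f) θ + (1 - Real.sqrt θ) * deriv f θ] := by
  exact isochoric_tfae_logSq_general W hOI hIso f (fun θ _ => hf θ)
    (hC2.differentiableOn two_ne_zero) (differentiableOn_deriv_of_contDiffOn_two hC2)
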